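/- Let R be a commutative ring. The following are equivalent: (1) R has an Artinian quotient ring Q = C⁻¹R; (2) (a) R̄ is a Goldie ring, (b) n is a nilpotent ideal, (c) C' ⊆ C, and (d) for every 1 ≤ i ≤ ν the R̄-module f_i contains no infinite direct sum of nonzero submodules; (3) (a) R̄ is a Goldie ring, (b) n is a nilpotent ideal, (c) every element of C̄ lifts to an element of C, and (d) for every 1 ≤ i ≤ ν the R̄-module f_i contains no infinite direct sum of nonzero submodules; (4) R is a Goldie ring and C' ⊆ C; (5) R is a Goldie ring and every element of C̄ lifts to an element of C. -/

import Mathlib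

universe u

/-- A subset of a ring is an annihilator set. -/
def IsAnnihilatorSet {R : Type*} [CommRing R] (A : Set R) : Prop :=
  ∃ S : Set R, A = {r : R | ∀ s ∈ S, r * s = 0}

/-- The ascending chain condition on annihilators. -/
def ACCAnnihilators (R : Type*) [CommRing R] : Prop :=
  ∀ f : ℕ → Set R, (∀ i, IsAnnihilatorSet (f i)) → (∀ i j, i ≤ j → f i ⊆ f j) →
    ∃ N, ∀ k, N ≤ k → f k = f N

/-- The module `M` contains no infinite direct sum of nonzero submodules. -/
def NoInfiniteIndepFamily (R : Type*) (M : Type*) [CommRing R] [AddCommGroup M]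
    [Module R M] : Prop :=
  ¬ ∃ f : ℕ → Submodule R M, (∀ i, f i ≠ ⊥) ∧ iSupIndep f

/-- A (commutative) Goldie ring: ACC on annihilators and no infinite direct sums of
nonzero ideals. -/
def IsGoldieRing (R : Type*) [CommRing R] : Prop :=
  ACCAnnihilators R ∧ NoInfiniteIndepFamily R R

/-- The subquotient `n^i/n^{i+1}` of `R`, where `n = nilradical R` is the prime radical. -/
abbrev grPieceC (R : Type u) [CommRing R] (i : ℕ) :=
  ↥(nilradical R ^ i) ⧸
    (Submodule.comap (nilradical R ^ i : Ideal R).subtype (nilradical R ^ (i + 1)))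

/-- The `C̄`-torsion submodule `τ_i` of `n^i/n^{i+1}` (the span of the set of torsion
elements, which is already a submodule in all relevant situations);  `C̄` is represented by
`C' = {c : R | c + n ∈ nonZeroDivisors (R/n)}`. -/
def tauSubC (R : Type u) [CommRing R] (i : ℕ) : Submodule R (grPieceC R i) :=
  Submodule.span R {u : grPieceC R i |
    ∃ c : R, Ideal.Quotient.mk (nilradical R) c ∈ nonZeroDivisors (R ⧸ nilradical R) ∧
      c • u = 0}

/-- The `C̄`-torsionfree module `f_i = (n^i/n^{i+1})/τ_i`. -/
abbrev fModC (R : Type u) [CommRing R] (i : ℕ) := grPieceC R i ⧸ tauSubC R i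

/-! ### Independent families -/

/-- An injective linear map `g` whose range meets every nonzero `A`-submodule of the target
carries the absence of infinite direct sums from its source to its target. -/
theorem NoInfiniteIndepFamily.of_essential {R A M M' : Type*} [CommRing R] [CommRing A]
    [Algebra R A] [AddCommGroup M] [Module R M] [AddCommGroup M'] [Module R M'] [Module A M']
    [IsScalarTower R A M'] (g : M →ₗ[R] M') (hg : Function.Injective g)
    (hess : ∀ y : M', y ≠ 0 → ∃ s : R, s • y ≠ 0 ∧ ∃ x, g x = s • y)
    (h : NoInfiniteIndepFamily R M) : NoInfiniteIndepFamily A M' := by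
  rintro ⟨U, hU, hind⟩
  refine h ⟨fun j => ((U j).restrictScalars R).comap g, fun j => ?_, fun j => ?_⟩
  · obtain ⟨y, hy, hy0⟩ := (Submodule.ne_bot_iff _).1 (hU j)
    obtain ⟨s, hs, x, hx⟩ := hess y hy0
    refine (Submodule.ne_bot_iff _).2 ⟨x, ?_, ?_⟩
    · simpa [hx] using ((U j).restrictScalars R).smul_mem s hy
    · rintro rfl
      exact hs (by rw [← hx, map_zero])
  · rw [Submodule.disjoint_def]
    intro x hx hx'
    have hle : (⨆ (k) (_ : k ≠ j), ((U k).restrictScalars R).comap g) ≤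
        ((⨆ (k) (_ : k ≠ j), U k).restrictScalars R).comap g := by
      refine iSup₂_le fun k hk z hz => ?_
      exact (le_iSup₂ (f := fun k (_ : k ≠ j) => U k) k hk) hz
    have := (Submodule.disjoint_def.1 (hind j)) (g x) hx (hle hx')
    exact hg (this.trans (map_zero g).symm)

theorem NoInfiniteIndepFamily.of_injective {R M M' : Type*} [CommRing R]
    [AddCommGroup M] [Module R M] [AddCommGroup M'] [Module R M'] (g : M →ₗ[R] M')
    (hg : Function.Injective g) (h : NoInfiniteIndepFamily R M') : NoInfiniteIndepFamily R M := by
  rintro ⟨f, hf, hind⟩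
  refine h ⟨fun j => (f j).map g, fun j => ?_, LinearMap.iSupIndep_map g hg hind⟩
  exact fun h0 => hf j (Submodule.map_injective_of_injective hg (h0.trans (Submodule.map_bot g).symm))

/-- The absence of infinite direct sums descends from a module over a localization to any
submodule over the base ring. -/
theorem NoInfiniteIndepFamily.of_isLocalization {R Q M M' : Type*} [CommRing R] [CommRing Q]
    [Algebra R Q] (S : Submonoid R) [IsLocalization S Q] [AddCommGroup M] [Module R M]
    [AddCommGroup M'] [Module R M'] [Module Q M'] [IsScalarTower R Q M'] (g : M →ₗ[R] M')
    (hg : Function.Injective g) (h : NoInfiniteIndepFamily Q M') :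
    NoInfiniteIndepFamily R M := by
  have key : ∀ (N : Submodule R M) (y : M'), y ∈ Submodule.span Q (N.map g : Set M') →
      ∃ s ∈ S, s • y ∈ N.map g := by
    intro N y hy
    induction hy using Submodule.span_induction with
    | mem x hx => exact ⟨1, S.one_mem, by simpa using hx⟩
    | zero => exact ⟨1, S.one_mem, by simp⟩
    | add x y _ _ hx hy =>
      obtain ⟨s, hs, hx⟩ := hx
      obtain ⟨t, ht, hy⟩ := hy
      refine ⟨s * t, S.mul_mem hs ht, ?_⟩
      rw [smul_add]
      refine add_mem ?_ ?_
      · rw [mul_comm, mul_smul]; exact Submodule.smul_mem _ _ hx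
      · rw [mul_smul]; exact Submodule.smul_mem _ _ hy
    | smul q x _ hx =>
      obtain ⟨s, hs, hx⟩ := hx
      obtain ⟨⟨r, t⟩, hq⟩ := IsLocalization.surj S q
      refine ⟨t * s, S.mul_mem t.2 hs, ?_⟩
      have : (t * s : R) • q • x = r • s • x := by
        rw [← algebraMap_smul Q (t * s : R), ← algebraMap_smul Q r, ← algebraMap_smul Q s,
          smul_smul, smul_smul, ← hq, map_mul]
        congr 1
        ring
      rw [this]
      exact Submodule.smul_mem _ _ hx
  rintro ⟨f, hf, hind⟩
  refine h ⟨fun j => Submodule.span Q ((f j).map g : Set M'), fun j => ?_, fun j => ?_⟩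
  · obtain ⟨x, hx, hx0⟩ := (Submodule.ne_bot_iff _).1 (hf j)
    refine (Submodule.ne_bot_iff _).2
      ⟨g x, Submodule.subset_span (Submodule.mem_map_of_mem hx), fun h0 => hx0 (hg ?_)⟩
    rw [h0, map_zero]
  · rw [Submodule.disjoint_def]
    intro y hy hy'
    have hle : (⨆ (k) (_ : k ≠ j), Submodule.span Q ((f k).map g : Set M')) ≤
        Submodule.span Q ((⨆ (k) (_ : k ≠ j), f k).map g : Set M') := by
      refine iSup₂_le fun k hk => Submodule.span_mono ?_
      exact Submodule.map_mono (le_iSup₂ (f := fun k (_ : k ≠ j) => f k) k hk)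
    obtain ⟨s, hs, x, hx, hxs⟩ := key _ y hy
    obtain ⟨t, ht, z, hz, hzt⟩ := key _ y (hle hy')
    have hxz : t • x = s • z := hg (by rw [map_smul, map_smul, hxs, hzt, smul_comm])
    have h0 : t • x = 0 := Submodule.disjoint_def.1 (hind j) _ (Submodule.smul_mem _ _ hx)
      (hxz ▸ Submodule.smul_mem _ _ hz)
    have h1 : (t * s) • y = 0 := by rw [mul_smul, ← hxs, ← map_smul, h0, map_zero]
    rw [← algebraMap_smul Q] at h1
    exact ((IsLocalization.map_units Q ⟨t * s, S.mul_mem ht hs⟩).smul_eq_zero).1 h1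

theorem NoInfiniteIndepFamily.of_isNoetherian {R M : Type*} [CommRing R] [AddCommGroup M]
    [Module R M] [IsNoetherian R M] : NoInfiniteIndepFamily R M := by
  rintro ⟨f, hf, hind⟩
  have := WellFoundedGT.finite_of_iSupIndep hind hf
  exact not_finite ℕ

theorem NoInfiniteIndepFamily.isNoetherian_of_isSemisimpleModule {R M : Type*} [CommRing R]
    [AddCommGroup M] [Module R M] [IsSemisimpleModule R M] (h : NoInfiniteIndepFamily R M) :
    IsNoetherian R M := by
  obtain ⟨s, hs, htop, hsimple⟩ := IsSemisimpleModule.exists_sSupIndep_sSup_simples_eq_top R M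
  have hfin : s.Finite := by
    by_contra hinf
    have : Infinite s := Set.infinite_coe_iff.2 hinf
    let e := Infinite.natEmbedding s
    refine h ⟨fun j => (e j : Submodule R M), fun j => ?_, ?_⟩
    · have := hsimple _ (e j).2
      exact (isSimpleModule_iff_isAtom.1 this).1
    · exact ((sSupIndep_iff s).1 hs).comp e.injective
  have := hfin.to_subtype
  have hN (m : s) : IsNoetherian R (m : Submodule R M) := by
    have := hsimple _ m.2
    infer_instance
  have hT : IsNoetherian R (⊤ : Submodule R M) := by
    rw [← htop, sSup_eq_iSup']
    infer_instance
  exact isNoetherian_top_iff.1 hT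

theorem Module.IsTorsionBySet.isSemisimpleModule_of_isSemisimpleRing {R M : Type*} [CommRing R]
    [AddCommGroup M] [Module R M] {I : Ideal R} [IsSemisimpleRing (R ⧸ I)]
    (h : Module.IsTorsionBySet R M I) : IsSemisimpleModule R M :=
  letI := h.module
  h.isSemisimpleModule_iff.1 inferInstance

/-! ### Chain conditions on annihilators -/

theorem isAnnihilatorSet_annihilator {R : Type*} [CommRing R] (I : Ideal R) :
    IsAnnihilatorSet (I.annihilator : Set R) :=
  ⟨I, by ext; simp [Submodule.mem_annihilator]⟩

theorem ACCAnnihilators.wellFounded {R : Type*} [CommRing R] (h : ACCAnnihilators R) :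
    WellFounded fun I J : Ideal R => J.annihilator < I.annihilator := by
  rw [wellFounded_iff_isEmpty_descending_chain]
  refine ⟨fun ⟨f, hf⟩ => ?_⟩
  have hmono : StrictMono fun i => (f i).annihilator := strictMono_nat_of_lt_succ hf
  obtain ⟨N, hN⟩ := h (fun i => (f i).annihilator) (fun i => isAnnihilatorSet_annihilator _)
    fun i j hij => hmono.monotone hij
  exact (hf N).ne' (SetLike.coe_injective (hN (N + 1) N.le_succ))

theorem Ideal.annihilator_annihilator_annihilator {R : Type*} [CommRing R] (I : Ideal R) :
    I.annihilator.annihilator.annihilator = I.annihilator := by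
  have h (J : Ideal R) : J ≤ J.annihilator.annihilator := fun x hx =>
    Submodule.mem_annihilator.2 fun y hy => by
      simpa [mul_comm] using Submodule.mem_annihilator.1 hy x hx
  exact le_antisymm (Submodule.annihilator_mono (h I)) (h _)

/-- Under the ascending chain condition on annihilators, every ideal has the same annihilator as
some finitely generated subideal. -/
theorem ACCAnnihilators.exists_finset {R : Type*} [CommRing R] (h : ACCAnnihilators R)
    (K : Ideal R) : ∃ s : Finset R, (∀ x ∈ s, x ∈ K) ∧
      ∀ y : R, (∀ x ∈ s, y * x = 0) → y ∈ K.annihilator := by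
  classical
  obtain ⟨A, ⟨s, hsK, rfl⟩, hmin⟩ := h.wellFounded.has_min
    {A : Ideal R | ∃ s : Finset R, (∀ x ∈ s, x ∈ K) ∧
      A = (Ideal.span (s : Set R)).annihilator} ⟨_, ∅, by simp, rfl⟩
  refine ⟨s, hsK, fun y hy => Submodule.mem_annihilator.2 fun x hx => ?_⟩
  have hle : (Ideal.span ((insert x s : Finset R) : Set R)).annihilator ≤
      (Ideal.span (s : Set R)).annihilator :=
    Submodule.annihilator_mono (Ideal.span_mono (by simp))
  have heq : (Ideal.span (s : Set R)).annihilator =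
      (Ideal.span ((insert x s : Finset R) : Set R)).annihilator := by
    have h1 := Submodule.annihilator_mono hle
    have h2 := hmin _ ⟨insert x s, by simpa using ⟨hx, hsK⟩, rfl⟩
    have h3 := eq_of_le_of_not_lt h1 h2
    rw [← Ideal.annihilator_annihilator_annihilator, h3,
      Ideal.annihilator_annihilator_annihilator]
  have hy' : y ∈ (Ideal.span (s : Set R)).annihilator :=
    (Submodule.mem_annihilator_span _ _).2 fun n => hy n n.2
  rw [heq] at hy'
  exact Submodule.mem_annihilator.1 hy' x (Ideal.subset_span (by simp))

theorem ACCAnnihilators.of_injective {R A : Type*} [CommRing R] [CommRing A] [IsNoetherianRing A]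
    (g : R →+* A) (hg : Function.Injective g) : ACCAnnihilators R := by
  intro f hf hmono
  let B : ℕ →o Ideal A :=
    ⟨fun i => (Ideal.span (g '' {r | ∀ a ∈ f i, r * a = 0})).annihilator, fun i j hij =>
      Submodule.annihilator_mono (Ideal.span_mono (Set.image_mono fun r hr a ha =>
        hr a (hmono i j hij ha)))⟩
  have hB (i : ℕ) : f i = g ⁻¹' (B i) := by
    ext x
    change _ ↔ g x ∈ (Ideal.span (g '' {r | ∀ a ∈ f i, r * a = 0})).annihilator
    rw [Submodule.mem_annihilator_span, Subtype.forall]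
    constructor
    · rintro hx _ ⟨r, hr, rfl⟩
      rw [smul_eq_mul, ← map_mul, mul_comm, hr x hx, map_zero]
    · intro hx
      obtain ⟨S, hS⟩ := hf i
      rw [hS]
      intro s hs
      refine hg ?_
      rw [map_mul, map_zero]
      refine hx _ ⟨s, fun a ha => ?_, rfl⟩
      rw [hS] at ha
      rw [mul_comm]
      exact ha s hs
  obtain ⟨N, hN⟩ := monotone_stabilizes_iff_noetherian.2 ‹_› B
  exact ⟨N, fun k hk => by rw [hB, hB, hN k hk]⟩

theorem ACCAnnihilators.isLocalization {R Q : Type*} [CommRing R] [CommRing Q] [Algebra R Q]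
    (S : Submonoid R) [IsLocalization S Q] (hS : S ≤ nonZeroDivisors R)
    (h : ACCAnnihilators R) : ACCAnnihilators Q := by
  intro f hf hmono
  have hinj := IsLocalization.injective Q hS
  have hann (i : ℕ) : IsAnnihilatorSet (algebraMap R Q ⁻¹' f i) := by
    obtain ⟨T, hT⟩ := hf i
    refine ⟨{a | ∃ t ∈ T, ∃ s : S, t * algebraMap R Q s = algebraMap R Q a}, ?_⟩
    ext r
    rw [Set.mem_preimage, hT]
    constructor
    · rintro hr a ⟨t, ht, s, hts⟩
      refine hinj ?_
      rw [map_mul, ← hts, ← mul_assoc, hr t ht, zero_mul, map_zero]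
    · intro hr t ht
      obtain ⟨⟨a, s⟩, hts⟩ := IsLocalization.surj S t
      have := congrArg (algebraMap R Q) (hr a ⟨t, ht, s, hts⟩)
      rwa [map_mul, ← hts, ← mul_assoc, map_zero,
        (IsLocalization.map_units Q s).mul_left_eq_zero] at this
  obtain ⟨N, hN⟩ := h (fun i => algebraMap R Q ⁻¹' f i) hann
    fun i j hij => Set.preimage_mono (hmono i j hij)
  have hfi (i : ℕ) (y : Q) (r : R) (s : S) (hy : y * algebraMap R Q s = algebraMap R Q r) :
      y ∈ f i ↔ algebraMap R Q r ∈ f i := by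
    obtain ⟨T, hT⟩ := hf i
    rw [hT, ← hy]
    refine forall₂_congr fun t _ => ?_
    rw [mul_right_comm, (IsLocalization.map_units Q s).mul_left_eq_zero]
  refine ⟨N, fun k hk => Set.ext fun y => ?_⟩
  obtain ⟨⟨r, s⟩, hy⟩ := IsLocalization.surj S y
  rw [hfi k y r s hy, hfi N y r s hy]
  exact Set.ext_iff.1 (hN k hk) r

/-- The nilradical is nilpotent under the ascending chain condition on annihilators. -/
theorem ACCAnnihilators.exists_nilradical_pow_eq_bot {R : Type*} [CommRing R]
    (h : ACCAnnihilators R) : ∃ k : ℕ, nilradical R ^ (k + 1) = ⊥ := by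
  obtain ⟨N, hN⟩ := h (fun i => (nilradical R ^ i).annihilator)
    (fun i => isAnnihilatorSet_annihilator _)
    fun i j hij => Submodule.annihilator_mono (Ideal.pow_le_pow_right hij)
  have hN : (nilradical R ^ (N + 1)).annihilator = (nilradical R ^ N).annihilator :=
    SetLike.coe_injective (hN (N + 1) N.le_succ)
  refine ⟨N, ?_⟩
  by_contra hne
  have hex : ∃ a ∈ nilradical R, a ∉ (nilradical R ^ N).annihilator := by
    by_contra! hall
    refine hne (le_bot_iff.1 ?_)
    rw [pow_succ', ← Submodule.annihilator_mul (nilradical R ^ N)]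
    exact Ideal.mul_mono_left hall
  obtain ⟨a₀, ha₀, ha₀'⟩ := hex
  obtain ⟨_, ⟨a, ha, ha', rfl⟩, hmin⟩ := h.wellFounded.has_min
    {I : Ideal R | ∃ a ∈ nilradical R, a ∉ (nilradical R ^ N).annihilator ∧ I = Ideal.span {a}}
    ⟨_, a₀, ha₀, ha₀', rfl⟩
  have hab (b : R) (hb : b ∈ nilradical R) : a * b ∈ (nilradical R ^ N).annihilator := by
    by_contra hab
    have h1 := hmin _ ⟨a * b, Ideal.mul_mem_left _ _ hb, hab, rfl⟩
    have h2 : (Ideal.span {a}).annihilator ≤ (Ideal.span {a * b}).annihilator :=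
      Submodule.annihilator_mono (Ideal.span_singleton_le_span_singleton.2 (dvd_mul_right a b))
    have h3 := eq_of_le_of_not_lt h2 h1
    have h4 (x : R) (hx : x * (a * b) = 0) : x * a = 0 := by
      have : x ∈ (Ideal.span {a * b}).annihilator :=
        (Submodule.mem_annihilator_span_singleton _ _).2 hx
      rw [← h3] at this
      exact (Submodule.mem_annihilator_span_singleton _ _).1 this
    have h5 (m : ℕ) : ∀ x, x * a * b ^ m = 0 → x * a = 0 := by
      induction m with
      | zero => simp
      | succ m ih =>
        intro x hx
        refine h4 x ?_
        have := ih (x * b) (by rw [← hx]; ring)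
        rw [← this]; ring
    obtain ⟨m, hm⟩ := mem_nilradical.1 hb
    refine ha' ?_
    have := h5 m 1 (by rw [hm, mul_zero])
    rw [one_mul] at this
    rw [this]
    exact zero_mem _
  refine ha' (hN ▸ Submodule.mem_annihilator.2 fun x hx => ?_)
  rw [pow_succ'] at hx
  induction hx using Submodule.mul_induction_on' with
  | mem_mul_mem b hb y hy =>
    rw [smul_eq_mul, ← mul_assoc]
    exact Submodule.mem_annihilator.1 (hab b hb) y hy
  | add x _ y _ hx hy => rw [smul_add, hx, hy, add_zero]

theorem ACCAnnihilators.finite_minimalPrimes {R : Type*} [CommRing R]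
    (h : ACCAnnihilators R) : (minimalPrimes R).Finite := by
  suffices H : ∀ K : Ideal R, K.annihilator.minimalPrimes.Finite by
    have := H ⊤
    rwa [show (⊤ : Ideal R).annihilator = ⊥ by
      ext x; simp only [Submodule.mem_annihilator, Ideal.mem_bot]
      exact ⟨fun hx => by simpa using hx 1 trivial, fun hx => by simp [hx]⟩] at this
  by_contra! hK
  obtain ⟨K, hK, hmax⟩ :=
    h.wellFounded.has_min {K : Ideal R | ¬ K.annihilator.minimalPrimes.Finite} hK
  have hprime : ¬ K.annihilator.IsPrime := by
    contrapose hK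
    simp [Ideal.minimalPrimes_eq_subsingleton_self]
  have htop : K.annihilator ≠ ⊤ := by
    contrapose hK
    simp [hK, Ideal.minimalPrimes_top]
  obtain ⟨x, hx, y, hy, hxy⟩ := (Ideal.not_isPrime_iff.mp hprime).resolve_left htop
  let K₁ := Ideal.span {x} * K
  let K₂ := K₁.annihilator * K
  have hle₁ : K.annihilator ≤ K₁.annihilator := Submodule.annihilator_mono Ideal.mul_le_right
  have hle₂ : K.annihilator ≤ K₂.annihilator := Submodule.annihilator_mono Ideal.mul_le_right
  have hy₁ : y ∈ K₁.annihilator := by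
    refine Submodule.mem_annihilator.2 fun z hz => ?_
    obtain ⟨w, hw, rfl⟩ := Ideal.mem_span_singleton_mul.1 hz
    rw [smul_eq_mul, ← mul_assoc, mul_comm y]
    exact Submodule.mem_annihilator.1 hxy w hw
  have hx₂ : x ∈ K₂.annihilator := by
    refine Submodule.mem_annihilator.2 fun z hz => ?_
    induction hz using Submodule.mul_induction_on' with
    | mem_mul_mem b hb w hw =>
      rw [smul_eq_mul, mul_left_comm]
      exact Submodule.mem_annihilator.1 hb _ (Ideal.mul_mem_mul (Ideal.mem_span_singleton_self x) hw)
    | add x _ y _ hx hy => rw [smul_add, hx, hy, add_zero]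
  have hlt₁ : K.annihilator < K₁.annihilator := lt_of_le_of_ne hle₁ fun he => hy (he ▸ hy₁)
  have hlt₂ : K.annihilator < K₂.annihilator := lt_of_le_of_ne hle₂ fun he => hx (he ▸ hx₂)
  have hfin₁ : K₁.annihilator.minimalPrimes.Finite := by
    by_contra hinf
    exact hmax K₁ hinf hlt₁
  have hfin₂ : K₂.annihilator.minimalPrimes.Finite := by
    by_contra hinf
    exact hmax K₂ hinf hlt₂
  have hmul : K₂.annihilator * K₁.annihilator ≤ K.annihilator := by
    rw [Submodule.le_annihilator_iff, smul_eq_mul, mul_assoc]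
    exact Submodule.annihilator_mul K₂
  refine hK ((hfin₁.union hfin₂).subset fun p ⟨⟨hp, hKp⟩, hmin⟩ => ?_)
  rcases hp.mul_le.1 (hmul.trans hKp) with hp₂ | hp₁
  · exact Or.inr ⟨⟨hp, hp₂⟩, fun q hq hqp => hmin ⟨hq.1, hle₂.trans hq.2⟩ hqp⟩
  · exact Or.inl ⟨⟨hp, hp₁⟩, fun q hq hqp => hmin ⟨hq.1, hle₁.trans hq.2⟩ hqp⟩

/-! ### Semiprimary rings -/

theorem IsSemiprimaryRing.of_finite_primes {Q : Type*} [CommRing Q]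
    (hfin : {I : Ideal Q | I.IsPrime}.Finite) (hmax : ∀ I : Ideal Q, I.IsPrime → I.IsMaximal)
    (hnil : IsNilpotent (nilradical Q)) : IsSemiprimaryRing Q := by
  have : Ring.KrullDimLE 0 Q := Ring.KrullDimLE.mk₀ hmax
  have eq := Ring.jacobson_eq_nilradical_of_krullDimLE_zero Q
  let Spec := {I : Ideal Q | I.IsPrime}
  have : Finite Spec := hfin
  have (I : Spec) : I.1.IsMaximal := hmax I I.2
  have (I : Spec) : IsSemisimpleRing (Q ⧸ I.1) := let _ := Ideal.Quotient.field I.1; inferInstance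
  have : IsSemisimpleRing (Q ⧸ Ring.jacobson Q) := by
    rw [eq, nilradical_eq_sInf, sInf_eq_iInf']
    exact (Ideal.quotientInfRingEquivPiQuotient _ fun I J ne =>
      Ideal.isCoprime_of_isMaximal <| Subtype.coe_ne_coe.mpr ne).symm.isSemisimpleRing
  exact ⟨this, eq ▸ hnil⟩

/-- A semiprimary ring without infinite direct sums of ideals that satisfies the ascending chain
condition on annihilators is Artinian. -/
theorem IsGoldieRing.isArtinianRing {Q : Type*} [CommRing Q] [IsSemiprimaryRing Q]
    (h : IsGoldieRing Q) : IsArtinianRing Q := by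
  obtain ⟨hacc, hind⟩ := h
  set J := Ring.jacobson Q with hJ
  have hsocle : IsNoetherian Q J.annihilator := by
    have htor : Module.IsTorsionBySet Q J.annihilator (Ring.jacobson Q) := fun y x =>
      Subtype.ext (by simpa [mul_comm] using Submodule.mem_annihilator.1 y.2 x x.2)
    have := htor.isSemisimpleModule_of_isSemisimpleRing
    exact (hind.of_injective J.annihilator.subtype
      (Submodule.subtype_injective _)).isNoetherian_of_isSemisimpleModule
  have hpow (i : ℕ) : IsNoetherian Q (J ^ i).annihilator := by
    induction i with
    | zero =>
      rw [pow_zero, Ideal.one_eq_top, show (⊤ : Ideal Q).annihilator = ⊥ from ?_]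
      · infer_instance
      · exact (Submodule.eq_bot_iff _).2 fun x hx => by
          simpa using Submodule.mem_annihilator.1 hx 1 trivial
    | succ i ih =>
      obtain ⟨s, hs, hann⟩ := hacc.exists_finset (J ^ i)
      have hmem (x : s) (y : (J ^ (i + 1)).annihilator) : (x : Q) * y ∈ J.annihilator := by
        refine Submodule.mem_annihilator.2 fun z hz => ?_
        rw [smul_eq_mul, mul_comm (x : Q), mul_assoc]
        exact Submodule.mem_annihilator.1 y.2 _ (Ideal.mul_mem_mul (hs x x.2) hz)
      let φ : (J ^ (i + 1)).annihilator →ₗ[Q] (s → J.annihilator) :=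
        LinearMap.pi fun x => ((LinearMap.mulLeft Q (x : Q)).comp
          (J ^ (i + 1)).annihilator.subtype).codRestrict J.annihilator (hmem x)
      have hle : (J ^ i).annihilator ≤ (J ^ (i + 1)).annihilator :=
        Submodule.annihilator_mono (Ideal.pow_le_pow_right i.le_succ)
      refine isNoetherian_of_range_eq_ker (Submodule.inclusion hle) φ ?_
      rw [Submodule.range_inclusion]
      ext y
      rw [Submodule.mem_comap, LinearMap.mem_ker]
      constructor
      · intro hy
        refine funext fun x => Subtype.ext ?_
        change (x : Q) * y = 0
        rw [mul_comm]
        exact Submodule.mem_annihilator.1 hy x (hs x x.2)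
      · intro hy
        refine hann _ fun x hx => ?_
        rw [mul_comm]
        exact congrArg Subtype.val (congrFun hy ⟨x, hx⟩)
  obtain ⟨k, hk⟩ := IsSemiprimaryRing.isNilpotent (R := Q)
  have := hpow k
  rw [hJ, hk, Ideal.zero_eq_bot, Submodule.annihilator_bot] at this
  have : IsNoetherian Q Q := isNoetherian_top_iff.1 this
  exact IsSemiprimaryRing.isNoetherian_iff_isArtinian.1 this

/-! ### The quotient ring and the nilradical -/

section QuotientRing

variable {R : Type*} [CommRing R]

theorem mk_nilradical_mem_nonZeroDivisors {c : R} (hc : c ∈ nonZeroDivisors R) :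
    Ideal.Quotient.mk (nilradical R) c ∈ nonZeroDivisors (R ⧸ nilradical R) := by
  refine mem_nonZeroDivisors_iff_right.2 fun x hx => ?_
  obtain ⟨r, rfl⟩ := Ideal.Quotient.mk_surjective x
  rw [← map_mul, Ideal.Quotient.eq_zero_iff_mem, mem_nilradical] at hx
  obtain ⟨k, hk⟩ := hx
  rw [Ideal.Quotient.eq_zero_iff_mem, mem_nilradical]
  refine ⟨k, ?_⟩
  rw [mul_pow] at hk
  exact (mul_right_mem_nonZeroDivisors_eq_zero_iff (pow_mem hc k)).1 hk

theorem mem_nonZeroDivisors_of_sub_mem_nilradical {c d : R} (hc : c ∈ nonZeroDivisors R)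
    (h : d - c ∈ nilradical R) : d ∈ nonZeroDivisors R := by
  refine mem_nonZeroDivisors_iff_right.2 fun r hr => ?_
  obtain ⟨k, hk⟩ := mem_nilradical.1 h
  have hpow (m : ℕ) : r * c ^ m = (-1) ^ m * (r * (d - c) ^ m) := by
    induction m with
    | zero => simp
    | succ m ih =>
      have : r * (d - c) ^ (m + 1) = - (c * (r * (d - c) ^ m)) := by
        linear_combination (d - c) ^ m * hr
      rw [this, pow_succ, ← mul_assoc, ih]
      ring
  have := hpow k
  rw [hk, mul_zero, mul_zero] at this
  exact (mul_right_mem_nonZeroDivisors_eq_zero_iff (pow_mem hc k)).1 this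

theorem forall_mem_nonZeroDivisors_iff_exists_lift :
    (∀ c : R, Ideal.Quotient.mk (nilradical R) c ∈ nonZeroDivisors (R ⧸ nilradical R) →
        c ∈ nonZeroDivisors R) ↔
      ∀ α : R ⧸ nilradical R, α ∈ nonZeroDivisors (R ⧸ nilradical R) →
        ∃ c : R, c ∈ nonZeroDivisors R ∧ Ideal.Quotient.mk (nilradical R) c = α := by
  constructor
  · intro h α hα
    obtain ⟨c, rfl⟩ := Ideal.Quotient.mk_surjective α
    exact ⟨c, h c hα, rfl⟩
  · intro h c hc
    obtain ⟨d, hd, hdc⟩ := h _ hc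
    exact mem_nonZeroDivisors_of_sub_mem_nilradical hd (Ideal.Quotient.eq.1 hdc.symm)

variable {Q : Type*} [CommRing Q] [Algebra R Q] [IsLocalization (nonZeroDivisors R) Q]

theorem IsArtinianRing.mem_nonZeroDivisors_of_mk_nilradical (Q : Type*) [CommRing Q] [Algebra R Q]
    [IsLocalization (nonZeroDivisors R) Q] [IsArtinianRing Q] (c : R)
    (hc : Ideal.Quotient.mk (nilradical R) c ∈ nonZeroDivisors (R ⧸ nilradical R)) :
    c ∈ nonZeroDivisors R := by
  have hinj := IsLocalization.injective Q (le_refl (nonZeroDivisors R))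
  obtain ⟨m, q, hq⟩ := IsArtinian.exists_pow_succ_smul_dvd (algebraMap R Q c) (1 : Q)
  obtain ⟨⟨r, s⟩, hrs⟩ := IsLocalization.surj (nonZeroDivisors R) q
  have h1 : c ^ m * (s - c * r) = 0 := by
    refine hinj ?_
    simp only [smul_eq_mul, mul_one] at hq
    simp only [map_mul, map_pow, map_sub, map_zero, ← hrs]
    rw [Nat.succ_eq_add_one, pow_succ] at hq
    linear_combination (- algebraMap R Q s) * hq
  have h2 : Ideal.Quotient.mk (nilradical R) (s - c * r) = 0 := by
    have := congrArg (Ideal.Quotient.mk (nilradical R)) h1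
    rw [map_mul, map_pow, map_zero] at this
    exact (mul_left_mem_nonZeroDivisors_eq_zero_iff (pow_mem hc m)).1 this
  have h3 : c * r ∈ nonZeroDivisors R := by
    refine mem_nonZeroDivisors_of_sub_mem_nilradical s.2 ?_
    rw [← neg_mem_iff, neg_sub]
    exact Ideal.Quotient.eq_zero_iff_mem.1 h2
  exact (mul_mem_nonZeroDivisors.1 h3).1

theorem IsLocalization.nilradical_eq_map :
    nilradical Q = (nilradical R).map (algebraMap R Q) := by
  refine le_antisymm (fun y hy => ?_) (Ideal.map_le_iff_le_comap.2 fun x hx => ?_)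
  · obtain ⟨⟨r, s⟩, hrs⟩ := IsLocalization.surj (nonZeroDivisors R) y
    rw [IsLocalization.mem_map_algebraMap_iff (nonZeroDivisors R)]
    refine ⟨⟨⟨r, ?_⟩, s⟩, hrs⟩
    have : IsNilpotent (algebraMap R Q r) := by
      rw [← hrs]
      exact (Commute.all _ _).isNilpotent_mul_right (mem_nilradical.1 hy)
    exact mem_nilradical.2
      ((IsNilpotent.map_iff (IsLocalization.injective Q (le_refl (nonZeroDivisors R)))).1 this)
  · exact mem_nilradical.2 (IsNilpotent.map (mem_nilradical.1 hx) (algebraMap R Q))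

theorem IsLocalization.comap_mem_minimalPrimes (hfin : (minimalPrimes R).Finite)
    (hC : ∀ c : R, Ideal.Quotient.mk (nilradical R) c ∈ nonZeroDivisors (R ⧸ nilradical R) →
      c ∈ nonZeroDivisors R) (P : Ideal Q) (hP : P.IsPrime) :
    P.comap (algebraMap R Q) ∈ minimalPrimes R := by
  have hsub : (P.comap (algebraMap R Q) : Set R) ⊆ ⋃ p ∈ minimalPrimes R, p := by
    intro x hx
    have hx' : x ∉ nonZeroDivisors R := fun hxC =>
      hP.ne_top (Ideal.eq_top_of_isUnit_mem _ hx (IsLocalization.map_units Q ⟨x, hxC⟩))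
    have hx'' := mt (hC x) hx'
    rw [mem_nonZeroDivisors_iff_right] at hx''
    push Not at hx''
    obtain ⟨y, hxy, hy⟩ := hx''
    obtain ⟨r, rfl⟩ := Ideal.Quotient.mk_surjective y
    rw [← map_mul, Ideal.Quotient.eq_zero_iff_mem] at hxy
    rw [Ne, Ideal.Quotient.eq_zero_iff_mem] at hy
    rw [minimalPrimes, Ideal.iUnion_minimalPrimes]
    exact ⟨r, hy, mul_comm r x ▸ hxy⟩
  obtain ⟨p, hp, hle⟩ := (Ideal.subset_union_prime_finite hfin (f := id) ⊥ ⊥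
    fun p hp _ _ => hp.1.1).1 hsub
  exact le_antisymm hle (hp.2 ⟨hP.comap _, bot_le⟩ hle) ▸ hp

theorem IsLocalization.isSemiprimaryRing (hfin : (minimalPrimes R).Finite)
    (hnil : ∃ k : ℕ, nilradical R ^ (k + 1) = ⊥)
    (hC : ∀ c : R, Ideal.Quotient.mk (nilradical R) c ∈ nonZeroDivisors (R ⧸ nilradical R) →
      c ∈ nonZeroDivisors R) : IsSemiprimaryRing Q := by
  have hcomap := IsLocalization.comap_mem_minimalPrimes (Q := Q) hfin hC
  have hinj : Function.Injective (Ideal.comap (algebraMap R Q)) := fun I J h =>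
    (IsLocalization.map_under (nonZeroDivisors R) Q I).symm.trans
      ((congrArg (Ideal.map (algebraMap R Q)) h).trans
        (IsLocalization.map_under (nonZeroDivisors R) Q J))
  refine .of_finite_primes ?_ (fun P hP => ?_) ?_
  · exact (hfin.preimage hinj.injOn).subset fun P hP => hcomap P hP
  · obtain ⟨M, hM, hle⟩ := P.exists_le_maximal hP.ne_top
    have hle' := Ideal.comap_mono (f := algebraMap R Q) hle
    have := le_antisymm hle' ((hcomap M hM.isPrime).2 (hcomap P hP).1 hle')
    exact hinj this ▸ hM
  · obtain ⟨k, hk⟩ := hnil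
    refine ⟨k + 1, ?_⟩
    rw [IsLocalization.nilradical_eq_map (R := R), ← Ideal.map_pow, hk, Ideal.map_bot,
      Ideal.zero_eq_bot]

/-- The map from `R` modulo its nilradical to `Q` modulo its nilradical. -/
theorem IsLocalization.exists_injective_quotient_nilradical :
    ∃ g : R ⧸ nilradical R →+* Q ⧸ nilradical Q, Function.Injective g ∧
      ∀ (r : R) (x : R ⧸ nilradical R), g (r • x) = r • g x := by
  have hcomap : (nilradical Q).comap (algebraMap R Q) = nilradical R := by
    ext x
    exact IsNilpotent.map_iff (IsLocalization.injective Q (le_refl (nonZeroDivisors R)))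
  refine ⟨Ideal.quotientMap _ (algebraMap R Q) hcomap.ge,
    Ideal.quotientMap_injective' hcomap.le, fun r x => ?_⟩
  obtain ⟨x, rfl⟩ := Ideal.Quotient.mk_surjective x
  rw [Algebra.smul_def, map_mul, Algebra.smul_def]
  rfl

end QuotientRing

/-! ### The subquotients of the nilradical filtration -/

section Subquotient

variable {R : Type u} [CommRing R] {Q : Type*} [CommRing Q] [Algebra R Q]

variable (R Q) in
/-- The `i`-th subquotient of the filtration of `Q` by the extensions of the powers of the
nilradical of `R`. -/
abbrev extGrPiece (i : ℕ) :=
  ↥((nilradical R ^ i).map (algebraMap R Q)) ⧸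
    (Submodule.comap ((nilradical R ^ i).map (algebraMap R Q)).subtype
      ((nilradical R ^ (i + 1)).map (algebraMap R Q)))

variable [IsLocalization (nonZeroDivisors R) Q]

theorem exists_fModC_linearMap
    (hC : ∀ c : R, Ideal.Quotient.mk (nilradical R) c ∈ nonZeroDivisors (R ⧸ nilradical R) →
      c ∈ nonZeroDivisors R) (i : ℕ) :
    ∃ g : fModC R i →ₗ[R] extGrPiece R Q i, Function.Injective g ∧
      ∀ y, y ≠ 0 → ∃ s : R, s • y ≠ 0 ∧ ∃ x, g x = s • y := by
  have hunit {c : R} (hc : c ∈ nonZeroDivisors R) {y : extGrPiece R Q i} (h : c • y = 0) :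
      y = 0 := by
    rw [← algebraMap_smul Q] at h
    exact ((IsLocalization.map_units Q ⟨c, hc⟩).smul_eq_zero).1 h
  let ι : ↥(nilradical R ^ i) →ₗ[R] ↥((nilradical R ^ i).map (algebraMap R Q)) :=
    { toFun x := ⟨algebraMap R Q x, Ideal.mem_map_of_mem _ x.2⟩
      map_add' x y := Subtype.ext (map_add _ _ _)
      map_smul' r x := Subtype.ext (by simp [Algebra.smul_def]) }
  let G : ↥(nilradical R ^ i) →ₗ[R] extGrPiece R Q i :=
    ((Submodule.mkQ _).restrictScalars R).comp ι
  have hG (x : ↥(nilradical R ^ i)) :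
      G x = 0 ↔ ∃ c ∈ nonZeroDivisors R, c * (x : R) ∈ nilradical R ^ (i + 1) := by
    rw [← IsLocalization.algebraMap_mem_map_algebraMap_iff (nonZeroDivisors R) Q]
    exact Submodule.Quotient.mk_eq_zero _
  let G₁ : grPieceC R i →ₗ[R] extGrPiece R Q i := Submodule.liftQ _ G fun x hx =>
    (hG x).2 ⟨1, one_mem _, by simpa using hx⟩
  have hG₁ : tauSubC R i ≤ LinearMap.ker G₁ := by
    refine Submodule.span_le.2 ?_
    rintro u ⟨c, hc, hcu⟩
    refine hunit (hC c hc) ?_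
    rw [← map_smul, hcu, map_zero]
  refine ⟨Submodule.liftQ _ G₁ hG₁, ?_, fun y hy => ?_⟩
  · refine (injective_iff_map_eq_zero _).2 fun z hz => ?_
    obtain ⟨u, rfl⟩ := Submodule.Quotient.mk_surjective _ z
    obtain ⟨x, rfl⟩ := Submodule.Quotient.mk_surjective _ u
    obtain ⟨c, hc, hcx⟩ := (hG x).1 hz
    refine (Submodule.Quotient.mk_eq_zero _).2 (Submodule.subset_span ?_)
    refine ⟨c, mk_nilradical_mem_nonZeroDivisors hc, ?_⟩
    rw [← Submodule.Quotient.mk_smul]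
    exact (Submodule.Quotient.mk_eq_zero _).2 hcx
  · obtain ⟨⟨q, hq⟩, rfl⟩ := Submodule.Quotient.mk_surjective _ y
    obtain ⟨⟨a, s⟩, hqs⟩ := (IsLocalization.mem_map_algebraMap_iff (nonZeroDivisors R) Q).1 hq
    refine ⟨s, fun h => hy (hunit s.2 h), Submodule.Quotient.mk (Submodule.Quotient.mk a), ?_⟩
    change Submodule.Quotient.mk (ι a) = _
    rw [← Submodule.Quotient.mk_smul]
    refine congrArg _ (Subtype.ext ?_)
    change algebraMap R Q a = (s : R) • q
    rw [Algebra.smul_def, mul_comm, hqs]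

theorem isArtinianRing_of_noInfiniteIndepFamily_fModC [IsSemiprimaryRing Q]
    (hnil : ∃ k : ℕ, nilradical R ^ (k + 1) = ⊥)
    (hC : ∀ c : R, Ideal.Quotient.mk (nilradical R) c ∈ nonZeroDivisors (R ⧸ nilradical R) →
      c ∈ nonZeroDivisors R)
    (hf : ∀ i : ℕ, 1 ≤ i → nilradical R ^ i ≠ ⊥ → NoInfiniteIndepFamily R (fModC R i)) :
    IsArtinianRing Q := by
  have hjac : Ring.jacobson Q = (nilradical R).map (algebraMap R Q) := by
    rw [← IsLocalization.nilradical_eq_map]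
    refine le_antisymm ?_ (fun x hx => ?_)
    · intro x hx
      obtain ⟨k, hk⟩ := IsSemiprimaryRing.isNilpotent (R := Q)
      exact mem_nilradical.2 ⟨k, by simpa [hk] using Ideal.pow_mem_pow hx k⟩
    · rw [Ring.jacobson_eq_sInf_isMaximal, Ideal.mem_sInf]
      intro I hI
      have := hI.isPrime
      exact nilradical_le_prime I hx
  obtain ⟨k, hk⟩ := hnil
  have hpow (j : ℕ) : ∀ i, 1 ≤ i → i + j = k + 1 →
      IsNoetherian Q ((nilradical R ^ i).map (algebraMap R Q)) := by
    induction j with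
    | zero =>
      rintro i - rfl
      rw [hk, Ideal.map_bot]
      infer_instance
    | succ j ih =>
      intro i hi hij
      by_cases hbot : nilradical R ^ i = ⊥
      · rw [hbot, Ideal.map_bot]
        infer_instance
      have := ih (i + 1) (by omega) (by omega)
      have htor : Module.IsTorsionBySet Q (extGrPiece R Q i) (Ring.jacobson Q) := by
        rintro y ⟨x, hx⟩
        obtain ⟨⟨y, hy⟩, rfl⟩ := Submodule.Quotient.mk_surjective _ y
        rw [hjac] at hx
        refine (Submodule.Quotient.mk_eq_zero _).2 ?_
        change x * y ∈ (nilradical R ^ (i + 1)).map (algebraMap R Q)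
        rw [pow_succ', Ideal.map_mul]
        exact Ideal.mul_mem_mul hx hy
      have := htor.isSemisimpleModule_of_isSemisimpleRing
      obtain ⟨g, hg, hess⟩ := exists_fModC_linearMap (Q := Q) hC i
      have := ((hf i hi hbot).of_essential (A := Q) g hg hess).isNoetherian_of_isSemisimpleModule
      refine isNoetherian_of_range_eq_ker (Submodule.inclusion
        (Ideal.map_mono (Ideal.pow_le_pow_right i.le_succ)))
        (Submodule.mkQ (Submodule.comap ((nilradical R ^ i).map (algebraMap R Q)).subtype
          ((nilradical R ^ (i + 1)).map (algebraMap R Q)))) ?_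
      rw [Submodule.range_inclusion, Submodule.ker_mkQ]
  have h1 := hpow k 1 le_rfl (add_comm 1 k)
  rw [pow_one, ← hjac] at h1
  have htor : Module.IsTorsionBySet Q (Q ⧸ Ring.jacobson Q) (Ring.jacobson Q) :=
    (Module.isTorsionBySet_quotient_iff _ _).2 fun x _ hr => Ideal.mul_mem_right x _ hr
  have := htor.isSemisimpleModule_of_isSemisimpleRing
  have h2 : IsNoetherian Q (Q ⧸ Ring.jacobson Q) := inferInstance
  have : IsNoetherian Q Q := (isNoetherian_iff_submodule_quotient (Ring.jacobson Q)).2 ⟨h1, h2⟩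
  exact IsSemiprimaryRing.isNoetherian_iff_isArtinian.1 this

end Subquotient

/-! ### The criterion -/

section Criterion

variable {R : Type u} [CommRing R] {Q : Type*} [CommRing Q] [Algebra R Q]
  [IsLocalization (nonZeroDivisors R) Q]

variable (Q) in
theorem IsArtinianRing.isGoldieRing_of_isLocalization [IsArtinianRing Q] : IsGoldieRing R :=
  have hinj := IsLocalization.injective Q (le_refl (nonZeroDivisors R))
  ⟨.of_injective (algebraMap R Q) hinj,
    .of_isLocalization (Q := Q) (nonZeroDivisors R) (Algebra.linearMap R Q) hinj .of_isNoetherian⟩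

variable (Q) in
theorem IsArtinianRing.isGoldieRing_quotient_nilradical [IsArtinianRing Q] :
    IsGoldieRing (R ⧸ nilradical R) := by
  obtain ⟨g, hg, hsmul⟩ := IsLocalization.exists_injective_quotient_nilradical (R := R) (Q := Q)
  let gL : (R ⧸ nilradical R) →ₗ[R] (Q ⧸ nilradical Q) :=
    { toFun := g, map_add' := map_add g, map_smul' := hsmul }
  have h : NoInfiniteIndepFamily R (R ⧸ nilradical R) :=
    .of_isLocalization (Q := Q) (nonZeroDivisors R) gL hg .of_isNoetherian
  exact ⟨.of_injective g hg, h.of_essential LinearMap.id Function.injective_id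
    fun y hy => ⟨1, by simpa using hy, y, by simp⟩⟩

variable (Q) in
theorem IsArtinianRing.noInfiniteIndepFamily_fModC [IsArtinianRing Q] (i : ℕ) :
    NoInfiniteIndepFamily R (fModC R i) := by
  obtain ⟨g, hg, -⟩ := exists_fModC_linearMap (R := R) (Q := Q)
    (IsArtinianRing.mem_nonZeroDivisors_of_mk_nilradical Q) i
  exact .of_isLocalization (Q := Q) (nonZeroDivisors R) g hg .of_isNoetherian

theorem finite_minimalPrimes_of_quotient_nilradical
    (h : (minimalPrimes (R ⧸ nilradical R)).Finite) : (minimalPrimes R).Finite := by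
  have hle : (minimalPrimes R) ⊆
      Ideal.comap (Ideal.Quotient.mk (nilradical R)) '' minimalPrimes (R ⧸ nilradical R) := by
    rw [minimalPrimes, minimalPrimes, ← Ideal.minimalPrimes_eq_comap, nilradical,
      Ideal.radical_minimalPrimes]
    rfl
  exact (h.image _).subset hle

variable (Q) in
theorem IsGoldieRing.of_isLocalization (h : IsGoldieRing R) : IsGoldieRing Q := by
  refine ⟨ACCAnnihilators.isLocalization (nonZeroDivisors R) le_rfl h.1,
    h.2.of_essential (A := Q) (Algebra.linearMap R Q)
      (IsLocalization.injective Q (le_refl (nonZeroDivisors R))) fun y hy => ?_⟩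
  obtain ⟨⟨r, s⟩, hrs⟩ := IsLocalization.surj (nonZeroDivisors R) y
  have hs : (s : R) • y = algebraMap R Q r := by rw [Algebra.smul_def, mul_comm, hrs]
  refine ⟨s, fun h0 => hy ?_, r, hs.symm⟩
  rw [Algebra.smul_def] at h0
  exact (IsLocalization.map_units Q s).mul_right_eq_zero.1 h0

end Criterion

/-- **Corollary (`x10Sep12`; with P. F. Smith).** Let `R` be a commutative ring,
`n = nilradical R` its prime radical, `R̄ = R/n`, `C` its set of regular elements
(non-zero-divisors) and `C'` the preimage of `C̄` under `R → R̄`.  TFAE: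
(1) `R` has an Artinian quotient ring `Q = C⁻¹R` (encoded: the localization of `R` at
`nonZeroDivisors R` is Artinian);
(2) (a) `R̄` is a Goldie ring, (b) `n` is nilpotent, (c) `C' ⊆ C`, (d) for `1 ≤ i ≤ ν` the
`R̄`-module `f_i` contains no infinite direct sum of nonzero submodules (the range
`1 ≤ i ≤ ν` is encoded as `1 ≤ i` and `n^i ≠ ⊥`);
(3) as (2) with (c) replaced by: every element of `C̄` lifts to an element of `C`;
(4) `R` is a Goldie ring and `C' ⊆ C`;
(5) `R` is a Goldie ring and every element of `C̄` lifts to an element of `C`. -/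
theorem commutative_artinian_quotient_ring_criterion (R : Type u) [CommRing R] :
    (IsArtinianRing (Localization (nonZeroDivisors R)) ↔
      (IsGoldieRing (R ⧸ nilradical R) ∧
        (∃ k : ℕ, nilradical R ^ (k + 1) = ⊥) ∧
        (∀ c : R, Ideal.Quotient.mk (nilradical R) c ∈ nonZeroDivisors (R ⧸ nilradical R) →
          c ∈ nonZeroDivisors R) ∧
        (∀ i : ℕ, 1 ≤ i → nilradical R ^ i ≠ ⊥ → NoInfiniteIndepFamily R (fModC R i)))) ∧
    (IsArtinianRing (Localization (nonZeroDivisors R)) ↔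
      (IsGoldieRing (R ⧸ nilradical R) ∧
        (∃ k : ℕ, nilradical R ^ (k + 1) = ⊥) ∧
        (∀ α : R ⧸ nilradical R, α ∈ nonZeroDivisors (R ⧸ nilradical R) →
          ∃ c : R, c ∈ nonZeroDivisors R ∧ Ideal.Quotient.mk (nilradical R) c = α) ∧
        (∀ i : ℕ, 1 ≤ i → nilradical R ^ i ≠ ⊥ → NoInfiniteIndepFamily R (fModC R i)))) ∧
    (IsArtinianRing (Localization (nonZeroDivisors R)) ↔
      (IsGoldieRing R ∧
        (∀ c : R, Ideal.Quotient.mk (nilradical R) c ∈ nonZeroDivisors (R ⧸ nilradical R) →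
          c ∈ nonZeroDivisors R))) ∧
    (IsArtinianRing (Localization (nonZeroDivisors R)) ↔
      (IsGoldieRing R ∧
        (∀ α : R ⧸ nilradical R, α ∈ nonZeroDivisors (R ⧸ nilradical R) →
          ∃ c : R, c ∈ nonZeroDivisors R ∧ Ideal.Quotient.mk (nilradical R) c = α))) := by
  set Q := Localization (nonZeroDivisors R)
  have h2 : IsArtinianRing Q ↔
      (IsGoldieRing (R ⧸ nilradical R) ∧
        (∃ k : ℕ, nilradical R ^ (k + 1) = ⊥) ∧
        (∀ c : R, Ideal.Quotient.mk (nilradical R) c ∈ nonZeroDivisors (R ⧸ nilradical R) →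
          c ∈ nonZeroDivisors R) ∧
        (∀ i : ℕ, 1 ≤ i → nilradical R ^ i ≠ ⊥ → NoInfiniteIndepFamily R (fModC R i))) := by
    refine ⟨fun _ => ⟨IsArtinianRing.isGoldieRing_quotient_nilradical Q,
      (IsArtinianRing.isGoldieRing_of_isLocalization Q).1.exists_nilradical_pow_eq_bot,
      IsArtinianRing.mem_nonZeroDivisors_of_mk_nilradical Q,
      fun i _ _ => IsArtinianRing.noInfiniteIndepFamily_fModC Q i⟩, ?_⟩
    rintro ⟨hG, hnil, hC, hf⟩
    have : IsSemiprimaryRing Q := IsLocalization.isSemiprimaryRing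
      (finite_minimalPrimes_of_quotient_nilradical hG.1.finite_minimalPrimes) hnil hC
    exact isArtinianRing_of_noInfiniteIndepFamily_fModC hnil hC hf
  have h4 : IsArtinianRing Q ↔
      (IsGoldieRing R ∧
        (∀ c : R, Ideal.Quotient.mk (nilradical R) c ∈ nonZeroDivisors (R ⧸ nilradical R) →
          c ∈ nonZeroDivisors R)) := by
    refine ⟨fun _ => ⟨IsArtinianRing.isGoldieRing_of_isLocalization Q,
      IsArtinianRing.mem_nonZeroDivisors_of_mk_nilradical Q⟩, ?_⟩
    rintro ⟨hG, hC⟩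
    have : IsSemiprimaryRing Q := IsLocalization.isSemiprimaryRing
      hG.1.finite_minimalPrimes hG.1.exists_nilradical_pow_eq_bot hC
    exact (hG.of_isLocalization Q).isArtinianRing
  refine ⟨h2, ?_, h4, ?_⟩
  · rwa [← forall_mem_nonZeroDivisors_iff_exists_lift]
  · rwa [← forall_mem_nonZeroDivisors_iff_exists_lift]
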